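/- Under the standing assumptions of Section 4 of the paper, assume additionally that idempotent morphisms in C split and that d̂₁ := ê₁∘d₁ and d̂₂ := ê₂∘d₂ are regular epimorphisms. Then for any modules (V, v) and (W, w) over the semigroup A, the object V∘W splitting the idempotent s carries an A-module structure: there is a unique morphism b : A⊗(V∘W) → V∘W with b∘(1⊗ŝ) = ŝ∘b⁰ (b⁰ the action of Lemma 4.6), and b is associative, a regular epimorphism, and non-degenerate on the left with respect to 𝒴. Moreover, for any morphisms of A-modules f : V → V′ and g : W → W′, the induced morphism ŝ′∘(f⊗g)∘š : V∘W → V′∘W′ is a morphism of A-modules. -/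

import Mathlib

open CategoryTheory Category MonoidalCategory Limits

universe v u

namespace WeakMultiplierBimonoid

variable {C : Type u} [Category.{v} C] [MonoidalCategory C] [BraidedCategory C]

def wl {A : C} (f : A ⊗ A ⟶ A ⊗ A) : A ⊗ (A ⊗ A) ⟶ A ⊗ (A ⊗ A) :=
  (α_ A A A).inv ≫ (f ▷ A) ≫ (α_ A A A).hom

def ml {A : C} (f : A ⊗ A ⟶ A) : A ⊗ (A ⊗ A) ⟶ A ⊗ A :=
  (α_ A A A).inv ≫ (f ▷ A)

def NdLeftOn {Z V W : C} (v : Z ⊗ V ⟶ W) (𝒴 : Set C) : Prop :=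
  ∀ (X : C), ∀ Y ∈ 𝒴, Function.Injective
    (fun g : X ⟶ V ⊗ Y => (Z ◁ g) ≫ (α_ Z V Y).inv ≫ (v ▷ Y))

def NdRightOn {Z V W : C} (v : Z ⊗ V ⟶ W) (𝒴 : Set C) : Prop :=
  NdLeftOn ((β_ V Z).hom ≫ v) 𝒴

/-- The "middle braiding" `1 ⊗ c ⊗ 1 : A⁴ ⟶ A⁴` on `(A ⊗ A) ⊗ (A ⊗ A)`. -/
def midSw (A : C) : (A ⊗ A) ⊗ (A ⊗ A) ⟶ (A ⊗ A) ⊗ (A ⊗ A) :=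
  (α_ A A (A ⊗ A)).hom ≫ (A ◁ (α_ A A A).inv) ≫ (A ◁ ((β_ A A).hom ▷ A)) ≫
    (A ◁ (α_ A A A).hom) ≫ (α_ A A (A ⊗ A)).inv

/-- A regular weak multiplier bimonoid on an object `A` of a braided monoidal category,
with multiplication non-degenerate with respect to the class `𝒴`
(Definition 2.9 of the paper). -/
structure RWMB (A : C) (𝒴 : Set C) where
  t₁ : A ⊗ A ⟶ A ⊗ A
  t₂ : A ⊗ A ⟶ A ⊗ A
  t₃ : A ⊗ A ⟶ A ⊗ A
  t₄ : A ⊗ A ⟶ A ⊗ A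
  e₁ : A ⊗ A ⟶ A ⊗ A
  e₂ : A ⊗ A ⟶ A ⊗ A
  j : A ⟶ 𝟙_ C
  /-- the induced multiplication -/
  m : A ⊗ A ⟶ A
  /-- counit condition (m1); in particular `m` is the induced multiplication -/
  hm₁ : m = t₁ ≫ (j ▷ A) ≫ (λ_ A).hom
  /-- counit condition (m2) -/
  hm₂ : m = t₂ ≫ (A ◁ j) ≫ (ρ_ A).hom
  /-- counit condition (m3) -/
  hm₃ : m = (β_ A A).hom ≫ t₃ ≫ (j ▷ A) ≫ (λ_ A).hom
  /-- counit condition (m4) -/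
  hm₄ : m = (β_ A A).hom ≫ t₄ ≫ (A ◁ j) ≫ (ρ_ A).hom
  /-- the class `𝒴` contains the monoidal unit -/
  memI : (𝟙_ C) ∈ 𝒴
  memA : A ∈ 𝒴
  memAA : (A ⊗ A) ∈ 𝒴
  /-- `m` is non-degenerate on the left with respect to `𝒴` -/
  ndl : NdLeftOn m 𝒴
  /-- `m` is non-degenerate on the right with respect to `𝒴` -/
  ndr : NdRightOn m 𝒴
  /-- relation (c12) -/
  hc12 : (A ◁ t₁) ≫ ml m = wl t₂ ≫ (A ◁ m)
  /-- relation (c13) -/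
  hc13 : wl t₁ ≫ (A ◁ (β_ A A).hom) ≫ (A ◁ m)
    = (A ◁ (β_ A A).hom) ≫ wl t₃ ≫ (A ◁ m)
  /-- relation (c14) -/
  hc14 : (A ◁ t₁) ≫ wl (β_ A A).hom ≫ ml m = wl t₄ ≫ (A ◁ m)
  /-- relation (c23) -/
  hc23 : wl t₂ ≫ (A ◁ (β_ A A).hom) ≫ (A ◁ m) = (A ◁ t₃) ≫ ml m
  /-- relation (c24) -/
  hc24 : (A ◁ t₂) ≫ wl (β_ A A).hom ≫ ml m = wl (β_ A A).hom ≫ (A ◁ t₄) ≫ ml m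
  /-- relation (c34) -/
  hc34 : (A ◁ t₃) ≫ wl (β_ A A).hom ≫ ml m = wl t₄ ≫ (A ◁ (β_ A A).hom) ≫ (A ◁ m)
  /-- interchange relation for `(t₂, t₁)` -/
  hi21 : (A ◁ t₁) ≫ wl t₂ = wl t₂ ≫ (A ◁ t₁)
  /-- interchange relation for `(t₄, t₁)` -/
  hi41 : (A ◁ t₁) ≫ wl t₄ = wl t₄ ≫ (A ◁ t₁)
  /-- interchange relation for `(t₂, t₃)` -/
  hi23 : (A ◁ t₃) ≫ wl t₂ = wl t₂ ≫ (A ◁ t₃)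
  /-- interchange relation for `(t₄, t₃)` -/
  hi43 : (A ◁ t₃) ≫ wl t₄ = wl t₄ ≫ (A ◁ t₃)
  /-- compatibility of the idempotents `e₁`, `e₂`:
  `(m ⊗ m) ∘ (1 ⊗ c ⊗ 1) ∘ (1 ⊗ 1 ⊗ e₁) = (m ⊗ m) ∘ (1 ⊗ c ⊗ 1) ∘ (e₂ ⊗ 1 ⊗ 1)` -/
  hecomp : ((A ⊗ A) ◁ e₁) ≫ midSw A ≫ (m ▷ (A ⊗ A)) ≫ (A ◁ m)
    = (e₂ ▷ (A ⊗ A)) ≫ midSw A ≫ (m ▷ (A ⊗ A)) ≫ (A ◁ m)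
  /-- Axiom I for the weakly counital fusion morphism `(t₁, e₁, j)` -/
  ax1 : (A ◁ t₁) ≫ wl (β_ A A).hom ≫ (A ◁ t₁) ≫ wl (β_ A A).inv ≫ wl t₁
    = wl t₁ ≫ (A ◁ t₁)
  /-- Axiom II -/
  ax2 : e₁ ≫ e₁ = e₁
  /-- Axiom III -/
  ax3 : t₁ ≫ e₁ = t₁
  /-- Axiom IV -/
  ax4 : (A ◁ e₁) ≫ (A ◁ (β_ A A).inv) ≫ wl t₁ ≫ (A ◁ (β_ A A).hom) ≫ ml m
    = (A ◁ (β_ A A).inv) ≫ wl t₁ ≫ (A ◁ (β_ A A).hom) ≫ ml m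
  /-- Axiom V -/
  ax5 : (A ◁ t₁) ≫ wl e₁ = wl e₁ ≫ (A ◁ t₁)
  /-- Axiom VI -/
  ax6 : wl t₁ ≫ (A ◁ e₁)
    = (A ◁ (β_ A A).inv) ≫ wl e₁ ≫ (A ◁ (β_ A A).hom) ≫ wl t₁
  /-- Axiom VII -/
  ax7 : wl t₁ ≫ (A ◁ ((j ▷ A) ≫ (λ_ A).hom)) ≫ m
    = (A ◁ (β_ A A).hom) ≫ (A ◁ e₁) ≫ (A ◁ ((A ◁ j) ≫ (ρ_ A).hom)) ≫ m
  /-- Axiom VIII -/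
  ax8 : wl t₁ ≫ (A ◁ (β_ A A).hom) ≫ ml m ≫ (j ▷ A) ≫ (λ_ A).hom
    = (A ◁ (β_ A A).hom) ≫ (A ◁ e₁) ≫ (A ◁ ((j ▷ A) ≫ (λ_ A).hom)) ≫ m

namespace RWMB

variable {A : C} {𝒴 : Set C} (S : RWMB A 𝒴)

/-- `⊓ᴸ₁ := (j ⊗ 1) ∘ e₁`. -/
def piL1 : A ⊗ A ⟶ A := S.e₁ ≫ (S.j ▷ A) ≫ (λ_ A).hom

/-- `⊓ᴸ₂ := (j ⊗ 1) ∘ t₄ ∘ c`. -/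
def piL2 : A ⊗ A ⟶ A := (β_ A A).hom ≫ S.t₄ ≫ (S.j ▷ A) ≫ (λ_ A).hom

/-- `⊓̄ᴿ₁ ∘ c⁻¹ = (1 ⊗ j) ∘ e₁`, the second leg of the coequalizer defining the base
object. -/
def piBarR1c : A ⊗ A ⟶ A := S.e₁ ≫ (A ◁ S.j) ≫ (ρ_ A).hom

end RWMB


/-- A module over the semigroup `(A, m)`, relative to the class `𝒴`: an object of `𝒴`
with an associative action which is a regular epimorphism and non-degenerate on the
left with respect to `𝒴`. -/
structure AModule (A : C) (m : A ⊗ A ⟶ A) (𝒴 : Set C) where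
  V : C
  mem : V ∈ 𝒴
  act : A ⊗ V ⟶ V
  assoc : (A ◁ act) ≫ act = (α_ A A V).inv ≫ (m ▷ V) ≫ act
  regEpi : Nonempty (RegularEpi act)
  nd : NdLeftOn act 𝒴

/-- The canonical idempotent
`s := (1 ⊗ ε ⊗ 1) ∘ (1 ⊗ μ ⊗ 1) ∘ (τ̄_V ⊗ τ_W) : V ⊗ W ⟶ V ⊗ W`. -/
def sIdem {L : C} (μ : L ⊗ L ⟶ L) (ε : L ⟶ 𝟙_ C) {V W : C}
    (τbV : V ⟶ V ⊗ L) (τW : W ⟶ L ⊗ W) : V ⊗ W ⟶ V ⊗ W :=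
  (τbV ▷ W) ≫ ((V ⊗ L) ◁ τW) ≫ (α_ V L (L ⊗ W)).hom ≫ (V ◁ (α_ L L W).inv) ≫
    (V ◁ (μ ▷ W)) ≫ (V ◁ (ε ▷ W)) ≫ (V ◁ (λ_ W).hom)

/-- `(v ⊗ w) ∘ (1 ⊗ c ⊗ 1) : (A ⊗ A) ⊗ (V ⊗ W) ⟶ V ⊗ W`, where the middle braiding
`c : A ⊗ V ⟶ V ⊗ A` interchanges the second `A` factor with `V`. -/
def actPair {A V W : C} (v : A ⊗ V ⟶ V) (w : A ⊗ W ⟶ W) :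
    (A ⊗ A) ⊗ (V ⊗ W) ⟶ V ⊗ W :=
  (α_ A A (V ⊗ W)).hom ≫ (A ◁ (α_ A V W).inv) ≫ (A ◁ ((β_ A V).hom ▷ W)) ≫
    (A ◁ (α_ V A W).hom) ≫ (α_ A V (A ⊗ W)).inv ≫ (v ▷ (A ⊗ W)) ≫ (V ◁ w)

/-- `d₁ := (m ⊗ 1) ∘ (1 ⊗ c) ∘ (t₁ ⊗ 1) ∘ (1 ⊗ c⁻¹) : A ⊗ A ⊗ A ⟶ A ⊗ A`. -/
def dOne {A : C} (m : A ⊗ A ⟶ A) (t₁ : A ⊗ A ⟶ A ⊗ A) : A ⊗ (A ⊗ A) ⟶ A ⊗ A :=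
  (A ◁ (β_ A A).inv) ≫ wl t₁ ≫ (A ◁ (β_ A A).hom) ≫ ml m

/-- `d₂ := (1 ⊗ m) ∘ (c ⊗ 1) ∘ (1 ⊗ t₂) ∘ (c⁻¹ ⊗ 1) : A ⊗ A ⊗ A ⟶ A ⊗ A`. -/
def dTwo {A : C} (m : A ⊗ A ⟶ A) (t₂ : A ⊗ A ⟶ A ⊗ A) : A ⊗ (A ⊗ A) ⟶ A ⊗ A :=
  wl (β_ A A).inv ≫ (A ◁ t₂) ≫ wl (β_ A A).hom ≫ (A ◁ m)

theorem conj_eq {A D A' D' : C} (B : C) (f : A ⊗ D ⟶ A' ⊗ D') :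
    A ◁ (β_ D B).inv ≫ (α_ A D B).inv ≫ f ▷ B ≫ (α_ A' D' B).hom ≫ A' ◁ (β_ D' B).hom
     = (α_ A B D).inv ≫ (β_ A B).hom ▷ D ≫ (α_ B A D).hom ≫ B ◁ f ≫ (α_ B A' D').inv ≫
        (β_ A' B).inv ▷ D' ≫ (α_ A' B D').hom := by
  have h := BraidedCategory.braiding_naturality_left f B
  rw [BraidedCategory.braiding_tensor_left_hom, BraidedCategory.braiding_tensor_left_hom] at h
  have h2 : f ▷ B ≫ (α_ A' D' B).hom ≫ A' ◁ (β_ D' B).hom =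
     ((α_ A D B).hom ≫ A ◁ (β_ D B).hom ≫ (α_ A B D).inv ≫
        (β_ A B).hom ▷ D ≫ (α_ B A D).hom) ≫ B ◁ f ≫ (α_ B A' D').inv ≫
        (β_ A' B).inv ▷ D' ≫ (α_ A' B D').hom := by
    simp only [assoc] at h ⊢
    rw [← reassoc_of% h]; simp
  rw [h2]; simp

namespace RWMB
variable {A : C} {𝒴 : Set C} (S : RWMB A 𝒴)

theorem dOne_eq : dOne S.m S.t₁ = wl (β_ A A).hom ≫ (A ◁ S.t₁) ≫ wl (β_ A A).inv ≫ ml S.m := by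
  have := conj_eq A S.t₁
  simp only [dOne, wl, ml, assoc] at this ⊢
  rw [reassoc_of% this]

theorem wl_t₁_j : wl S.t₁ ≫ S.j ▷ (A ⊗ A) ≫ (λ_ (A ⊗ A)).hom = ml S.m := by
  simp only [wl, ml, S.hm₁]
  simp

theorem t₁_dOne : A ◁ S.t₁ ≫ dOne S.m S.t₁ = ml S.m ≫ S.t₁ := by
  have h := S.ax1 =≫ (S.j ▷ (A ⊗ A) ≫ (λ_ (A ⊗ A)).hom)
  simp only [assoc, wl_t₁_j] at h
  rw [dOne_eq, h, whisker_exchange_assoc, ← wl_t₁_j]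
  simp

theorem dOne_j : dOne S.m S.t₁ ≫ S.j ▷ A ≫ (λ_ A).hom = A ◁ S.piL1 ≫ S.m := by
  have h := S.ax8
  have h2 := A ◁ (β_ A A).inv ≫= h
  simp only [← whiskerLeft_comp_assoc] at h2
  simpa [dOne, piL1] using h2

theorem assoc_m : A ◁ S.m ≫ S.m = (α_ A A A).inv ≫ S.m ▷ A ≫ S.m := by
  have h := S.t₁_dOne =≫ (S.j ▷ A ≫ (λ_ A).hom)
  simp only [assoc, dOne_j, ← S.hm₁] at h
  rw [← whiskerLeft_comp_assoc, piL1, reassoc_of% S.ax3, ← S.hm₁] at h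
  simpa [ml] using h

end RWMB

/-- componentwise product of two pairings -/
def PP {X₁ X₂ Y₁ Y₂ Z₁ Z₂ : C} (x : X₁ ⊗ Y₁ ⟶ Z₁) (y : X₂ ⊗ Y₂ ⟶ Z₂) :
    (X₁ ⊗ X₂) ⊗ (Y₁ ⊗ Y₂) ⟶ Z₁ ⊗ Z₂ := tensorμ X₁ X₂ Y₁ Y₂ ≫ (x ⊗ₘ y)

theorem actPair_eq {A V W : C} (v : A ⊗ V ⟶ V) (w : A ⊗ W ⟶ W) : actPair v w = PP v w := by
  simp [actPair, PP, tensorμ, MonoidalCategory.tensorHom_def]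

theorem PP_assoc {X₁ X₂ Y₁ Y₂ Z₁ Z₂ U₁ U₂ T₁ T₂ R₁ R₂ : C}
    {f₁ : X₁ ⊗ Y₁ ⟶ U₁} {g₁ : U₁ ⊗ Z₁ ⟶ T₁} {h₁ : Y₁ ⊗ Z₁ ⟶ R₁} {k₁ : X₁ ⊗ R₁ ⟶ T₁}
    {f₂ : X₂ ⊗ Y₂ ⟶ U₂} {g₂ : U₂ ⊗ Z₂ ⟶ T₂} {h₂ : Y₂ ⊗ Z₂ ⟶ R₂} {k₂ : X₂ ⊗ R₂ ⟶ T₂}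
    (e₁ : f₁ ▷ Z₁ ≫ g₁ = (α_ _ _ _).hom ≫ X₁ ◁ h₁ ≫ k₁)
    (e₂ : f₂ ▷ Z₂ ≫ g₂ = (α_ _ _ _).hom ≫ X₂ ◁ h₂ ≫ k₂) :
    PP f₁ f₂ ▷ (Z₁ ⊗ Z₂) ≫ PP g₁ g₂ =
      (α_ _ _ _).hom ≫ (X₁ ⊗ X₂) ◁ PP h₁ h₂ ≫ PP k₁ k₂ := by
  simp only [PP, comp_whiskerRight, whiskerLeft_comp, assoc]
  rw [tensorμ_natural_left_assoc, tensorμ_natural_right_assoc, tensorHom_comp_tensorHom,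
    tensorHom_comp_tensorHom, e₁, e₂, ← tensor_associativity_assoc, tensorHom_comp_tensorHom]

theorem PP_nd {A₁ A₂ V V' W W' : C} {v : A₁ ⊗ V ⟶ V'} {w : A₂ ⊗ W ⟶ W'} {𝒴 : Set C}
    (hclosed : ∀ Y Y' : C, Y ∈ 𝒴 → Y' ∈ 𝒴 → (Y ⊗ Y') ∈ 𝒴)
    (hv : NdLeftOn v 𝒴) (hw : NdLeftOn w 𝒴) (hV : V ∈ 𝒴) (hW' : W' ∈ 𝒴)  :
    NdLeftOn (PP v w) 𝒴 := by
  intro X Y hY g g' h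
  have key : ∀ g : X ⟶ (V ⊗ W) ⊗ Y, (α_ A₁ A₂ X).inv ≫
      (A₁ ⊗ A₂) ◁ g ≫ (α_ _ _ _).inv ≫ (PP v w) ▷ Y ≫ (α_ _ _ _).hom =
      A₁ ◁ (A₂ ◁ g ≫ A₂ ◁ (α_ _ _ _).hom ≫ (α_ _ _ _).inv ≫ (β_ A₂ V).hom ▷ (W ⊗ Y) ≫
        (α_ _ _ _).hom ≫ V ◁ ((α_ _ _ _).inv ≫ w ▷ Y)) ≫ (α_ A₁ V (W' ⊗ Y)).inv ≫
        v ▷ (W' ⊗ Y) := by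
    intro g
    simp only [PP, tensorμ, tensorHom_def']
    simp only [comp_whiskerRight, whiskerLeft_comp, assoc]
    monoidal
  have h1 := hv (A₂ ⊗ X) (W' ⊗ Y) (hclosed _ _ hW' hY) (by
    show A₁ ◁ (A₂ ◁ g ≫ A₂ ◁ (α_ _ _ _).hom ≫ (α_ _ _ _).inv ≫ (β_ A₂ V).hom ▷ (W ⊗ Y) ≫
        (α_ _ _ _).hom ≫ V ◁ ((α_ _ _ _).inv ≫ w ▷ Y)) ≫ (α_ A₁ V (W' ⊗ Y)).inv ≫
        v ▷ (W' ⊗ Y) = A₁ ◁ (A₂ ◁ g' ≫ A₂ ◁ (α_ _ _ _).hom ≫ (α_ _ _ _).inv ≫ (β_ A₂ V).hom ▷ (W ⊗ Y) ≫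
        (α_ _ _ _).hom ≫ V ◁ ((α_ _ _ _).inv ≫ w ▷ Y)) ≫ (α_ A₁ V (W' ⊗ Y)).inv ≫
        v ▷ (W' ⊗ Y)
    rw [← key, ← key]
    dsimp only at h
    rw [reassoc_of% h])
  have key2 : ∀ g : X ⟶ (V ⊗ W) ⊗ Y, (A₂ ◁ g ≫ A₂ ◁ (α_ _ _ _).hom ≫ (α_ _ _ _).inv ≫ (β_ A₂ V).hom ▷ (W ⊗ Y) ≫
        (α_ _ _ _).hom ≫ V ◁ ((α_ _ _ _).inv ≫ w ▷ Y)) ≫ (β_ (W' ⊗ Y) V).inv ≫ (α_ _ _ _).hom =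
     A₂ ◁ (g ≫ (α_ _ _ _).hom ≫ (β_ (W ⊗ Y) V).inv ≫ (α_ _ _ _).hom) ≫ (α_ _ _ _).inv ≫
       w ▷ (Y ⊗ V) := by
    intro g
    simp only [assoc]
    rw [BraidedCategory.braiding_inv_naturality_right_assoc]
    have e : (β_ A₂ V).hom ▷ (W ⊗ Y) ≫ (α_ V A₂ (W ⊗ Y)).hom ≫ (β_ (A₂ ⊗ (W ⊗ Y)) V).inv =
      (α_ _ _ _).hom ≫ A₂ ◁ (β_ (W ⊗ Y) V).inv ≫ (α_ _ _ _).inv := by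
      rw [BraidedCategory.braiding_tensor_left_inv]; simp
    rw [reassoc_of% e]
    simp
  have h2 := hw X (Y ⊗ V) (hclosed _ _ hY hV)
    (a₁ := g ≫ (α_ _ _ _).hom ≫ (β_ (W ⊗ Y) V).inv ≫ (α_ _ _ _).hom)
    (a₂ := g' ≫ (α_ _ _ _).hom ≫ (β_ (W ⊗ Y) V).inv ≫ (α_ _ _ _).hom) (by
    dsimp only
    rw [← key2, ← key2, h1])
  simpa only [cancel_mono] using h2

theorem nd_plain {Z V W X : C} {v : Z ⊗ V ⟶ W} {𝒴 : Set C} (hI : 𝟙_ C ∈ 𝒴)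
    (hv : NdLeftOn v 𝒴) {g g' : X ⟶ V} (h : Z ◁ g ≫ v = Z ◁ g' ≫ v) : g = g' := by
  have := hv X (𝟙_ C) hI (a₁ := g ≫ (ρ_ V).inv) (a₂ := g' ≫ (ρ_ V).inv) (by
    dsimp only
    have e : ∀ g : X ⟶ V, Z ◁ (g ≫ (ρ_ V).inv) ≫ (α_ Z V (𝟙_ C)).inv ≫ v ▷ 𝟙_ C = (Z ◁ g ≫ v) ≫
        (ρ_ W).inv := by
      intro g
      simp
    rw [e, e, h])
  simpa using this

namespace RWMB
variable {A : C} {𝒴 : Set C} (S : RWMB A 𝒴)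

/-- multiplication on A ⊗ A -/
def M : (A ⊗ A) ⊗ (A ⊗ A) ⟶ A ⊗ A := PP S.m S.m

def r1 : (A ⊗ A) ⊗ A ⟶ A ⊗ A := (α_ A A A).hom ≫ A ◁ (β_ A A).hom ≫ (α_ A A A).inv ≫ S.m ▷ A
def r2 : (A ⊗ A) ⊗ A ⟶ A ⊗ A := (α_ A A A).hom ≫ A ◁ S.m

theorem r1_eq : S.r1 = (A ⊗ A) ◁ (ρ_ A).inv ≫ PP S.m (ρ_ A).hom := by
  simp only [r1, PP, tensorμ, tensorHom_def', assoc]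
  have h := BraidedCategory.braiding_tensor_right_hom A A (𝟙_ C)
  have h2 := BraidedCategory.braiding_naturality_right A (ρ_ A).hom
  rw [h] at h2
  rw [← cancel_epi ((A ⊗ A) ◁ (ρ_ A).hom)]
  have h3 : (A ⊗ A) ◁ (ρ_ A).hom ≫ (α_ A A A).hom ≫ A ◁ (β_ A A).hom = 
      (α_ A A _).hom ≫ A ◁ (A ◁ (ρ_ A).hom ≫ (β_ A A).hom) := by simp
  rw [reassoc_of% h3, h2]
  simp only [whiskerLeft_comp, assoc, braiding_tensorUnit_right]
  monoidal

theorem r2_eq : S.r2 = (A ⊗ A) ◁ (λ_ A).inv ≫ PP (ρ_ A).hom S.m := by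
  simp only [r2, PP, tensorμ, tensorHom_def', assoc, braiding_tensorUnit_right]
  simp only [whiskerLeft_comp, comp_whiskerRight, assoc]
  monoidal

theorem assoc_m' : S.m ▷ A ≫ S.m = (α_ A A A).hom ≫ A ◁ S.m ≫ S.m := by
  rw [assoc_m]; simp

theorem M_assoc : S.M ▷ (A ⊗ A) ≫ S.M = (α_ _ _ _).hom ≫ (A ⊗ A) ◁ S.M ≫ S.M :=
  PP_assoc S.assoc_m' S.assoc_m'

theorem hecomp' : ((A ⊗ A) ◁ S.e₁) ≫ S.M = S.e₂ ▷ (A ⊗ A) ≫ S.M := by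
  have := S.hecomp
  simpa [midSw, M, PP, tensorμ, MonoidalCategory.tensorHom_def] using this

theorem M_r1 : (A ⊗ A) ◁ S.r1 ≫ S.M = (α_ _ _ _).inv ≫ S.M ▷ A ≫ S.r1 := by
  have := PP_assoc (f₁ := S.m) (g₁ := S.m) (h₁ := S.m) (k₁ := S.m) (f₂ := S.m) (g₂ := (ρ_ A).hom)
    (h₂ := (ρ_ A).hom) (k₂ := S.m) S.assoc_m' (by monoidal)
  rw [r1_eq, M, whiskerLeft_comp, assoc, ← whisker_exchange_assoc, this]
  monoidal

theorem M_r2 : (A ⊗ A) ◁ S.r2 ≫ S.M = (α_ _ _ _).inv ≫ S.M ▷ A ≫ S.r2 := by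
  have := PP_assoc (f₂ := S.m) (g₂ := S.m) (h₂ := S.m) (k₂ := S.m) (f₁ := S.m) (g₁ := (ρ_ A).hom)
    (h₁ := (ρ_ A).hom) (k₁ := S.m) (by monoidal) S.assoc_m' 
  rw [r2_eq, M, whiskerLeft_comp, assoc, ← whisker_exchange_assoc, this]
  monoidal

theorem M_nd (hclosed : ∀ Y Y' : C, Y ∈ 𝒴 → Y' ∈ 𝒴 → (Y ⊗ Y') ∈ 𝒴) : NdLeftOn S.M 𝒴 :=
  PP_nd hclosed S.ndl S.ndl S.memA S.memA

theorem e₁_lin_aux (hclosed : ∀ Y Y' : C, Y ∈ 𝒴 → Y' ∈ 𝒴 → (Y ⊗ Y') ∈ 𝒴) {B : C}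
    (r : (A ⊗ A) ⊗ B ⟶ A ⊗ A) (hr : (A ⊗ A) ◁ r ≫ S.M = (α_ _ _ _).inv ≫ S.M ▷ B ≫ r) :
    r ≫ S.e₁ = S.e₁ ▷ B ≫ r := by
  apply nd_plain S.memI (S.M_nd hclosed)
  rw [whiskerLeft_comp, assoc, hecomp', whisker_exchange_assoc, hr, whiskerLeft_comp, assoc, hr]
  have : S.e₂ ▷ ((A ⊗ A) ⊗ B) ≫ (α_ (A ⊗ A) (A ⊗ A) B).inv =
    (α_ (A ⊗ A) (A ⊗ A) B).inv ≫ (S.e₂ ▷ (A ⊗ A)) ▷ B := by simp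
  rw [reassoc_of% this, ← comp_whiskerRight_assoc, ← hecomp']
  simp

theorem e₁_r1 (hclosed : ∀ Y Y' : C, Y ∈ 𝒴 → Y' ∈ 𝒴 → (Y ⊗ Y') ∈ 𝒴) :
    S.r1 ≫ S.e₁ = S.e₁ ▷ A ≫ S.r1 := S.e₁_lin_aux hclosed _ S.M_r1
theorem e₁_r2 (hclosed : ∀ Y Y' : C, Y ∈ 𝒴 → Y' ∈ 𝒴 → (Y ⊗ Y') ∈ 𝒴) :
    S.r2 ≫ S.e₁ = S.e₁ ▷ A ≫ S.r2 := S.e₁_lin_aux hclosed _ S.M_r2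

theorem dOne_r1 : dOne S.m S.t₁ = A ◁ (β_ A A).inv ≫ (α_ A A A).inv ≫ S.t₁ ▷ A ≫ S.r1 := by
  simp [dOne, r1, wl, ml]

theorem dOne_e₁ (hclosed : ∀ Y Y' : C, Y ∈ 𝒴 → Y' ∈ 𝒴 → (Y ⊗ Y') ∈ 𝒴) :
    dOne S.m S.t₁ ≫ S.e₁ = dOne S.m S.t₁ := by
  simp only [dOne_r1, assoc, S.e₁_r1 hclosed]
  rw [← comp_whiskerRight_assoc, S.ax3]

end RWMB

theorem right_nd {A : C} {𝒴 : Set C} {m : A ⊗ A ⟶ A} (h : NdRightOn m 𝒴) {X Y : C} (hY : Y ∈ 𝒴)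
    {g g' : X ⟶ Y ⊗ A} (e : g ▷ A ≫ (α_ _ _ _).hom ≫ Y ◁ m = g' ▷ A ≫ (α_ _ _ _).hom ≫ Y ◁ m) :
    g = g' := by
  have key : ∀ g : X ⟶ Y ⊗ A, A ◁ (g ≫ (β_ A Y).inv) ≫ (α_ A A Y).inv ≫ ((β_ A A).hom ≫ m) ▷ Y =
      (β_ A X).hom ≫ (g ▷ A ≫ (α_ _ _ _).hom ≫ Y ◁ m) ≫ (β_ A Y).inv := by
    intro g
    rw [← cancel_mono (β_ A Y).hom]
    simp only [assoc, comp_whiskerRight, Iso.inv_hom_id, comp_id]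
    rw [← BraidedCategory.braiding_naturality_right_assoc,
      BraidedCategory.braiding_naturality_left]
    have e1 := BraidedCategory.braiding_naturality_left (β_ A A).hom Y
    rw [reassoc_of% e1]
    simp only [BraidedCategory.braiding_tensor_left_hom, BraidedCategory.braiding_tensor_right_hom,
      whiskerLeft_comp, assoc]
    simp only [Iso.inv_hom_id_assoc, ← whiskerLeft_comp_assoc, Iso.inv_hom_id, whiskerLeft_id, id_comp]
  have := h X Y hY (a₁ := g ≫ (β_ A Y).inv) (a₂ := g' ≫ (β_ A Y).inv) (by
    dsimp only
    rw [key, key, e])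
  simpa only [cancel_mono] using this

namespace RWMB
variable {A : C} {𝒴 : Set C} (S : RWMB A 𝒴)

def q : A ⊗ A ⟶ A ⊗ A := (β_ A A).hom ≫ S.t₄

theorem q_j : S.q ≫ A ◁ S.j ≫ (ρ_ A).hom = S.m := by
  rw [q, S.hm₄]; simp

theorem c14' : A ◁ S.t₁ ≫ wl (β_ A A).inv ≫ ml S.m = wl S.t₄ ≫ A ◁ S.m := by
  have h := S.hi41 =≫ (A ◁ (S.j ▷ A ≫ (λ_ A).hom))
  simp only [assoc, ← whiskerLeft_comp, ← S.hm₁] at h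
  rw [← h]
  have h4 : (β_ A A).inv ≫ S.m = S.t₄ ≫ A ◁ S.j ≫ (ρ_ A).hom := by
    rw [S.hm₄]; simp
  have : wl S.t₄ ≫ A ◁ (S.j ▷ A ≫ (λ_ A).hom) =
      (α_ _ _ _).inv ≫ (S.t₄ ≫ A ◁ S.j ≫ (ρ_ A).hom) ▷ A := by
    simp only [wl]; monoidal
  rw [this, ← h4]
  simp [wl, ml]

theorem q_m : wl S.q ≫ A ◁ S.m = dOne S.m S.t₁ := by
  rw [dOne_eq, c14']
  simp [wl, q]

theorem r1_braid : S.r1 ≫ (β_ A A).inv = (β_ A A).inv ▷ A ≫ (α_ _ _ _).hom ≫ A ◁ S.m := by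
  simp only [r1, assoc]
  rw [BraidedCategory.braiding_inv_naturality_left, BraidedCategory.braiding_tensor_right_inv]
  simp

theorem nd_r1 {X : C} {G G' : X ⟶ A ⊗ (A ⊗ A)}
    (h : G ▷ A ≫ (α_ _ _ _).hom ≫ A ◁ S.r1 = G' ▷ A ≫ (α_ _ _ _).hom ≫ A ◁ S.r1) : G = G' := by
  have key : ∀ G : X ⟶ A ⊗ (A ⊗ A), (G ≫ A ◁ (β_ A A).inv ≫ (α_ _ _ _).inv) ▷ A ≫
      (α_ _ _ _).hom ≫ (A ⊗ A) ◁ S.m =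
      (G ▷ A ≫ (α_ _ _ _).hom ≫ A ◁ S.r1) ≫ A ◁ (β_ A A).inv ≫ (α_ _ _ _).inv := by
    intro G
    simp only [assoc]
    rw [← whiskerLeft_comp_assoc, r1_braid]
    simp
  have := right_nd S.ndr S.memAA (g := G ≫ A ◁ (β_ A A).inv ≫ (α_ _ _ _).inv)
    (g' := G' ≫ A ◁ (β_ A A).inv ≫ (α_ _ _ _).inv) (by rw [key, key, h])
  simpa only [cancel_mono] using this

theorem q_r1 : wl S.q ▷ A ≫ (α_ _ _ _).hom ≫ A ◁ S.r1 =
    𝟙 _ ⊗≫ (A ⊗ A) ◁ (β_ A A).hom ⊗≫ dOne S.m S.t₁ ▷ A ⊗≫ 𝟙 _ := by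
  rw [← q_m, r1, wl]
  calc _ = 𝟙 _ ⊗≫ (S.q ▷ (A ⊗ A) ≫ (A ⊗ A) ◁ (β_ A A).hom) ⊗≫ A ◁ S.m ▷ A ⊗≫ 𝟙 _ := by monoidal
    _ = _ := by rw [← whisker_exchange]; monoidal

theorem dOne_ex : dOne S.m S.t₁ =
    𝟙 _ ⊗≫ (β_ A A).hom ▷ A ⊗≫ A ◁ S.t₁ ⊗≫ (β_ A A).inv ▷ A ⊗≫ S.m ▷ A := by
  rw [dOne_eq, wl, wl, ml]; monoidal

/-- the idempotent acting on the first and third factor -/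
def ce : A ⊗ (A ⊗ A) ⟶ A ⊗ (A ⊗ A) := A ◁ (β_ A A).inv ≫ wl S.e₁ ≫ A ◁ (β_ A A).hom

theorem ce_eq : S.ce =
    (α_ A A A).inv ≫ (β_ A A).hom ▷ A ≫ (α_ A A A).hom ≫ A ◁ S.e₁ ≫ (α_ A A A).inv ≫
        (β_ A A).inv ▷ A ≫ (α_ A A A).hom := by
  rw [← conj_eq]; simp [ce, wl]

theorem R2' (hclosed : ∀ Y Y' : C, Y ∈ 𝒴 → Y' ∈ 𝒴 → (Y ⊗ Y') ∈ 𝒴) :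
    wl S.q ≫ A ◁ S.e₁ = S.ce ≫ wl S.q := by
  apply S.nd_r1
  have h1 : (wl S.q ≫ A ◁ S.e₁) ▷ A ≫ (α_ _ _ _).hom ≫ A ◁ S.r1 =
      (wl S.q ▷ A ≫ (α_ _ _ _).hom ≫ A ◁ S.r1) ≫ A ◁ S.e₁ := by
    simp only [assoc, ← whiskerLeft_comp, S.e₁_r1 hclosed]
    simp
  rw [h1, q_r1, comp_whiskerRight, assoc, q_r1, dOne_ex]
  have hax : A ◁ (β_ A A).hom ≫ wl S.t₁ ≫ A ◁ S.e₁ = wl S.e₁ ≫ A ◁ (β_ A A).hom ≫ wl S.t₁ := by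
    rw [S.ax6]; simp
  calc _ = 𝟙 _ ⊗≫ ((A ⊗ A) ◁ (β_ A A).hom ≫ (β_ A A).hom ▷ (A ⊗ A)) ⊗≫ A ◁ (wl S.t₁ ≫ A ◁ S.e₁) ⊗≫
         (β_ A A).inv ▷ (A ⊗ A) ⊗≫ S.m ▷ (A ⊗ A) ⊗≫ 𝟙 _ := by
        calc _ = 𝟙 _ ⊗≫ (A ⊗ A) ◁ (β_ A A).hom ⊗≫ (β_ A A).hom ▷ (A ⊗ A) ⊗≫ A ◁ (S.t₁ ▷ A) ⊗≫
               (β_ A A).inv ▷ (A ⊗ A) ⊗≫ (S.m ▷ (A ⊗ A) ≫ A ◁ S.e₁) := by monoidal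
          _ = 𝟙 _ ⊗≫ (A ⊗ A) ◁ (β_ A A).hom ⊗≫ (β_ A A).hom ▷ (A ⊗ A) ⊗≫ A ◁ (S.t₁ ▷ A) ⊗≫
               ((β_ A A).inv ▷ (A ⊗ A) ≫ (A ⊗ A) ◁ S.e₁) ⊗≫ S.m ▷ (A ⊗ A) := by
              rw [← whisker_exchange]; monoidal
          _ = _ := by
              rw [← whisker_exchange, wl]; monoidal
    _ = 𝟙 _ ⊗≫ (β_ A A).hom ▷ (A ⊗ A) ⊗≫ A ◁ (A ◁ (β_ A A).hom ≫ wl S.t₁ ≫ A ◁ S.e₁) ⊗≫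
         (β_ A A).inv ▷ (A ⊗ A) ⊗≫ S.m ▷ (A ⊗ A) ⊗≫ 𝟙 _ := by
        rw [whisker_exchange]; monoidal
    _ = 𝟙 _ ⊗≫ (β_ A A).hom ▷ (A ⊗ A) ⊗≫ A ◁ (S.e₁ ▷ A) ⊗≫ (A ⊗ A) ◁ (β_ A A).hom ⊗≫ A ◁ (wl S.t₁) ⊗≫
         (β_ A A).inv ▷ (A ⊗ A) ⊗≫ S.m ▷ (A ⊗ A) ⊗≫ 𝟙 _ := by
        rw [hax, wl]; monoidal
    _ = 𝟙 _ ⊗≫ (β_ A A).hom ▷ (A ⊗ A) ⊗≫ A ◁ (S.e₁ ▷ A) ⊗≫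
         (((β_ A A).inv ≫ (β_ A A).hom) ▷ (A ⊗ A) ≫ (A ⊗ A) ◁ (β_ A A).hom) ⊗≫ A ◁ (wl S.t₁) ⊗≫
         (β_ A A).inv ▷ (A ⊗ A) ⊗≫ S.m ▷ (A ⊗ A) ⊗≫ 𝟙 _ := by
        rw [Iso.inv_hom_id, id_whiskerRight, id_comp]
    _ = 𝟙 _ ⊗≫ (β_ A A).hom ▷ (A ⊗ A) ⊗≫ A ◁ (S.e₁ ▷ A) ⊗≫
         (β_ A A).inv ▷ (A ⊗ A) ⊗≫ ((A ⊗ A) ◁ (β_ A A).hom ≫ (β_ A A).hom ▷ (A ⊗ A)) ⊗≫ A ◁ (wl S.t₁) ⊗≫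
         (β_ A A).inv ▷ (A ⊗ A) ⊗≫ S.m ▷ (A ⊗ A) ⊗≫ 𝟙 _ := by
        rw [comp_whiskerRight, assoc, whisker_exchange]; monoidal
    _ = _ := by
        rw [ce_eq, wl]; monoidal

theorem R2 (hclosed : ∀ Y Y' : C, Y ∈ 𝒴 → Y' ∈ 𝒴 → (Y ⊗ Y') ∈ 𝒴) :
    wl S.q ≫ A ◁ S.piL1 = ml S.m ≫ S.e₁ := by
  have h := S.R2' hclosed =≫ (A ◁ (S.j ▷ A ≫ (λ_ A).hom))
  have h1 : wl S.q ≫ A ◁ (S.j ▷ A ≫ (λ_ A).hom) = ml S.m := by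
    rw [ml, ← q_j, wl]; monoidal
  rw [assoc, assoc, h1, ← whiskerLeft_comp] at h
  rw [piL1, h]
  have h2 : S.ce ≫ ml S.m = A ◁ (β_ A A).inv ≫ (α_ _ _ _).inv ≫ S.e₁ ▷ A ≫ S.r1 := by
    simp [ce, ml, r1, wl]
  rw [h2, ← S.e₁_r1 hclosed]
  simp [r1, ml]

end RWMB

theorem sIdem_ex {L : C} (μ : L ⊗ L ⟶ L) (ε : L ⟶ 𝟙_ C) {V W : C}
    (τb : V ⟶ V ⊗ L) (τ : W ⟶ L ⊗ W) : sIdem μ ε τb τ =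
    (τb ▷ W ≫ (V ⊗ L) ◁ τ) ⊗≫ V ◁ ((μ ≫ ε) ▷ W) ⊗≫ 𝟙 _ := by
  simp only [sIdem]; monoidal

theorem s_PP {A L V W : C} {μ : L ⊗ L ⟶ L} {ε : L ⟶ 𝟙_ C} {v : A ⊗ V ⟶ V} {w : A ⊗ W ⟶ W}
    {τbar : A ⟶ A ⊗ L} {τ : A ⟶ L ⊗ A} {τbM : V ⟶ V ⊗ L} {τN : W ⟶ L ⊗ W}
    (hτbM : v ≫ τbM = (τbar ▷ V) ≫ (α_ A L V).hom ≫ (A ◁ (β_ L V).hom) ≫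
      (α_ A V L).inv ≫ (v ▷ L))
    (hτN : w ≫ τN = (τ ▷ W) ≫ (α_ L A W).hom ≫ (L ◁ w)) :
    PP v w ≫ sIdem μ ε τbM τN = sIdem μ ε τbar τ ▷ (V ⊗ W) ≫ PP v w := by
  rw [sIdem_ex, sIdem_ex]
  generalize μ ≫ ε = κ
  have hk : κ ▷ A ▷ V ≫ (λ_ A).hom ▷ V ≫ (β_ A V).hom =
      (α_ _ _ _).hom ▷ V ≫ (β_ (L ⊗ (L ⊗ A)) V).hom ≫ V ◁ ((α_ _ _ _).inv ≫ κ ▷ A ≫ (λ_ A).hom) := by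
    rw [← BraidedCategory.braiding_naturality_left]; simp
  have hl : PP v w ≫ (τbM ▷ W ≫ (V ⊗ L) ◁ τN) = tensorμ A A V W ≫ (v ≫ τbM) ▷ (A ⊗ W) ≫
      (V ⊗ L) ◁ (w ≫ τN) := by
    simp only [PP, MonoidalCategory.tensorHom_def, assoc, comp_whiskerRight, whiskerLeft_comp]
    rw [whisker_exchange_assoc]
  calc _ = (PP v w ≫ (τbM ▷ W ≫ (V ⊗ L) ◁ τN)) ⊗≫ V ◁ (κ ▷ W) ⊗≫ 𝟙 _ := by monoidal
    _ = 𝟙 _ ⊗≫ A ◁ (β_ A V).hom ▷ W ⊗≫ τbar ▷ (V ⊗ A ⊗ W) ⊗≫ A ◁ (β_ L V).hom ▷ (A ⊗ W) ⊗≫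
          v ▷ (L ⊗ A ⊗ W) ⊗≫ (V ⊗ L) ◁ (τ ▷ W) ⊗≫ V ◁ ((L ⊗ L) ◁ w ≫ κ ▷ W) ⊗≫ 𝟙 _ := by
        rw [hl, hτbM, hτN, tensorμ]; monoidal
    _ = 𝟙 _ ⊗≫ A ◁ (β_ A V).hom ▷ W ⊗≫ τbar ▷ (V ⊗ A ⊗ W) ⊗≫ A ◁ (β_ L V).hom ▷ (A ⊗ W) ⊗≫
          (v ▷ (L ⊗ A ⊗ W) ≫ V ◁ (L ◁ (τ ▷ W) ⊗≫ κ ▷ (A ⊗ W) ⊗≫ w)) := by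
        rw [whisker_exchange]; monoidal
    _ = 𝟙 _ ⊗≫ A ◁ (β_ A V).hom ▷ W ⊗≫ τbar ▷ (V ⊗ A ⊗ W) ⊗≫ A ◁ (β_ L V).hom ▷ (A ⊗ W) ⊗≫
          (A ⊗ V) ◁ (L ◁ (τ ▷ W) ⊗≫ κ ▷ (A ⊗ W)) ⊗≫ ((A ⊗ V) ◁ w ≫ v ▷ W) := by
        rw [← whisker_exchange]; monoidal
    _ = 𝟙 _ ⊗≫ A ◁ (β_ A V).hom ▷ W ⊗≫ τbar ▷ (V ⊗ A ⊗ W) ⊗≫ 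
          A ◁ ((β_ L V).hom ▷ A ≫ (V ⊗ L) ◁ τ) ▷ W ⊗≫
          (A ⊗ V) ◁ (κ ▷ (A ⊗ W)) ⊗≫ (v ▷ (A ⊗ W) ≫ V ◁ w) := by
        rw [whisker_exchange]; monoidal
    _ = 𝟙 _ ⊗≫ (A ◁ (β_ A V).hom ≫ τbar ▷ (V ⊗ A)) ▷ W ⊗≫ A ◁ (L ⊗ V) ◁ τ ▷ W ⊗≫
          A ◁ (β_ L V).hom ▷ (L ⊗ A) ▷ W ⊗≫
          (A ⊗ V) ◁ (κ ▷ (A ⊗ W)) ⊗≫ (v ▷ (A ⊗ W) ≫ V ◁ w) := by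
        rw [← whisker_exchange]; monoidal
    _ = 𝟙 _ ⊗≫ τbar ▷ (A ⊗ V ⊗ W) ⊗≫ (A ⊗ L) ◁ ((β_ A V).hom ≫ V ◁ τ) ▷ W ⊗≫
          A ◁ (β_ L V).hom ▷ (L ⊗ A) ▷ W ⊗≫
          (A ⊗ V) ◁ (κ ▷ (A ⊗ W)) ⊗≫ (v ▷ (A ⊗ W) ≫ V ◁ w) := by
        rw [whisker_exchange]; monoidal
    _ = 𝟙 _ ⊗≫ τbar ▷ (A ⊗ V ⊗ W) ⊗≫ (A ⊗ L) ◁ (τ ▷ V ≫ (β_ (L ⊗ A) V).hom) ▷ W ⊗≫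
          A ◁ (β_ L V).hom ▷ (L ⊗ A) ▷ W ⊗≫
          (A ⊗ V) ◁ (κ ▷ (A ⊗ W)) ⊗≫ (v ▷ (A ⊗ W) ≫ V ◁ w) := by
        rw [BraidedCategory.braiding_naturality_left]
    _ = 𝟙 _ ⊗≫ τbar ▷ (A ⊗ V ⊗ W) ⊗≫ (A ⊗ L) ◁ τ ▷ V ▷ W ⊗≫ A ◁ ((α_ _ _ _).hom ▷ V ≫ (β_ (L ⊗ (L ⊗ A)) V).hom
          ≫ V ◁ ((α_ _ _ _).inv ≫ κ ▷ A ≫ (λ_ A).hom)) ▷ W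
          ⊗≫ (v ▷ (A ⊗ W) ≫ V ◁ w) := by
        rw [BraidedCategory.braiding_tensor_left_hom L (L ⊗ A)]; monoidal
    _ = _ := by
        rw [← hk, PP, tensorμ, MonoidalCategory.tensorHom_def]; monoidal

namespace RWMB
variable {A : C} {𝒴 : Set C} (S : RWMB A 𝒴)

theorem F_eq (hclosed : ∀ Y Y' : C, Y ∈ 𝒴 → Y' ∈ 𝒴 → (Y ⊗ Y') ∈ 𝒴)
    (ep1 : Epi (S.m ▷ A)) (ep2 : Epi ((A ⊗ A) ◁ S.m))
    {L : C} {p : A ⟶ L} {n₁ : L ⊗ A ⟶ A} (hn₁ : (p ▷ A) ≫ n₁ = S.piL1)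
    {μ : L ⊗ L ⟶ L} (hμ : (L ◁ p) ≫ μ = n₁ ≫ p) {ε : L ⟶ 𝟙_ C} (hε : p ≫ ε = S.j)
    {τ : A ⟶ L ⊗ A} (hτ : S.m ≫ τ = S.t₁ ≫ (p ▷ A))
    {τbar : A ⟶ A ⊗ L} (hτbar : S.m ≫ τbar = (β_ A A).hom ≫ S.t₄ ≫ (A ◁ p)) :
    sIdem μ ε τbar τ = S.e₁ := by
  have hκ : (p ▷ A ≫ L ◁ p) ≫ μ ≫ ε = S.piL1 ≫ S.j := by
    rw [assoc, reassoc_of% hμ, reassoc_of% hn₁, hε]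
  have hτb : S.m ≫ τbar = S.q ≫ A ◁ p := by rw [hτbar, q, assoc]
  rw [← cancel_epi (S.m ▷ A), ← cancel_epi ((A ⊗ A) ◁ S.m), sIdem_ex]
  have h1 : (A ⊗ A) ◁ S.m ≫ S.m ▷ A ≫ (τbar ▷ A ≫ (A ⊗ L) ◁ τ) =
     (A ⊗ A) ◁ S.t₁ ≫ S.q ▷ (A ⊗ A) ≫ (A ◁ p) ▷ (A ⊗ A) ≫ (A ⊗ L) ◁ (p ▷ A) := by
    rw [← comp_whiskerRight_assoc, whisker_exchange_assoc, ← whiskerLeft_comp, hτb, hτ,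
      comp_whiskerRight, assoc, whiskerLeft_comp, ← whisker_exchange_assoc, ← whisker_exchange_assoc]
  have h2 : A ◁ S.t₁ ≫ wl S.e₁ ≫ A ◁ (S.j ▷ A ≫ (λ_ A).hom) = A ◁ S.m ≫ S.e₁ := by
    rw [reassoc_of% S.ax5, ← whiskerLeft_comp, ← S.hm₁]
    have := S.e₁_r2 hclosed
    rw [r2, assoc] at this
    rw [wl, assoc, assoc, ← this]; simp
  calc _ = ((A ⊗ A) ◁ S.m ≫ S.m ▷ A ≫ (τbar ▷ A ≫ (A ⊗ L) ◁ τ)) ⊗≫ A ◁ ((μ ≫ ε) ▷ A) ⊗≫ 𝟙 _ := by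
        monoidal
    _ = (A ⊗ A) ◁ S.t₁ ⊗≫ S.q ▷ (A ⊗ A) ⊗≫ A ◁ (((p ▷ A ≫ L ◁ p) ≫ μ ≫ ε) ▷ A) ⊗≫ 𝟙 _ := by
        rw [h1]; monoidal
    _ = (A ⊗ A) ◁ S.t₁ ⊗≫ (wl S.q ≫ A ◁ S.piL1) ▷ A ⊗≫ A ◁ (S.j ▷ A ≫ (λ_ A).hom) := by
        rw [hκ, wl]; monoidal
    _ = ((A ⊗ A) ◁ S.t₁ ≫ S.m ▷ (A ⊗ A)) ⊗≫ S.e₁ ▷ A ⊗≫ A ◁ (S.j ▷ A ≫ (λ_ A).hom) := by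
        rw [S.R2 hclosed, ml]; monoidal
    _ = S.m ▷ (A ⊗ A) ≫ (A ◁ S.t₁ ≫ wl S.e₁ ≫ A ◁ (S.j ▷ A ≫ (λ_ A).hom)) := by
        rw [whisker_exchange, wl]; monoidal
    _ = _ := by
        rw [h2, whisker_exchange_assoc]

theorem r1_r1 : S.r1 ▷ A ≫ S.r1 = (α_ _ _ _).hom ≫ (A ⊗ A) ◁ S.m ≫ S.r1 := by
  have := PP_assoc (f₁ := S.m) (g₁ := S.m) (h₁ := S.m) (k₁ := S.m) (f₂ := (ρ_ A).hom)
    (g₂ := (ρ_ A).hom) (h₂ := (ρ_ (𝟙_ C)).hom) (k₂ := (ρ_ A).hom) S.assoc_m' (by monoidal)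
  have h3 : PP S.m (ρ_ (𝟙_ C)).hom = 𝟙 _ ⊗≫ S.m ⊗≫ 𝟙 _ := by
    simp only [PP, tensorμ, tensorHom_def', braiding_tensorUnit_left]
    monoidal
  rw [r1_eq]
  calc _ = 𝟙 _ ⊗≫ (PP S.m (ρ_ A).hom ▷ A ≫ (A ⊗ A) ◁ (ρ_ A).inv) ≫ PP S.m (ρ_ A).hom := by monoidal
    _ = 𝟙 _ ⊗≫ (PP S.m (ρ_ A).hom ▷ (A ⊗ 𝟙_ C) ≫ PP S.m (ρ_ A).hom) := by
      rw [← whisker_exchange]; monoidal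
    _ = _ := by
      rw [this, h3]; monoidal

theorem dOne_lin : A ◁ S.r1 ≫ dOne S.m S.t₁ = (α_ _ _ _).inv ≫ dOne S.m S.t₁ ▷ A ≫ S.r1 := by
  rw [dOne_r1]
  have h : A ◁ S.r1 ≫ A ◁ (β_ A A).inv = A ◁ ((β_ A A).inv ▷ A ≫ (α_ _ _ _).hom ≫ A ◁ S.m) := by
    rw [← whiskerLeft_comp, r1_braid]
  rw [reassoc_of% h]
  calc _ = 𝟙 _ ⊗≫ A ◁ ((β_ A A).inv ▷ A) ⊗≫ ((A ⊗ A) ◁ S.m ≫ S.t₁ ▷ A) ≫ S.r1 := by monoidal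
    _ = 𝟙 _ ⊗≫ A ◁ ((β_ A A).inv ▷ A) ⊗≫ S.t₁ ▷ A ▷ A ≫ ((α_ _ _ _).hom ≫ (A ⊗ A) ◁ S.m ≫ S.r1) := by
      rw [whisker_exchange]; monoidal
    _ = _ := by rw [← r1_r1]; monoidal

theorem dOne_assoc : A ◁ dOne S.m S.t₁ ≫ dOne S.m S.t₁ =
    (α_ _ _ _).inv ≫ S.m ▷ (A ⊗ A) ≫ dOne S.m S.t₁ := by
  calc _ = A ◁ (A ◁ (β_ A A).inv ≫ (α_ A A A).inv ≫ S.t₁ ▷ A) ≫ (A ◁ S.r1 ≫ dOne S.m S.t₁) := by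
        conv_lhs => rw [S.dOne_r1]
        conv_rhs => rw [S.dOne_r1]
        simp only [whiskerLeft_comp, assoc]
    _ = A ◁ (A ◁ (β_ A A).inv ≫ (α_ A A A).inv) ⊗≫ (A ◁ S.t₁ ≫ dOne S.m S.t₁) ▷ A ≫ S.r1 := by
        rw [dOne_lin]; monoidal
    _ = 𝟙 _ ⊗≫ ((A ⊗ A) ◁ (β_ A A).inv ≫ S.m ▷ (A ⊗ A)) ⊗≫ S.t₁ ▷ A ≫ S.r1 := by
        rw [t₁_dOne, ml]; monoidal
    _ = _ := by
        rw [whisker_exchange, dOne_r1]; monoidal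

theorem M_r2r1 : (A ⊗ A) ◁ (β_ A A).inv ≫ (α_ _ _ _).inv ≫ S.r2 ▷ A ≫ S.r1 = S.M := by
  have h := BraidedCategory.braiding_naturality_left S.m A
  rw [BraidedCategory.braiding_tensor_left_hom] at h
  calc _ = 𝟙 _ ⊗≫ A ◁ (A ◁ (β_ A A).inv) ⊗≫ A ◁ (S.m ▷ A ≫ (β_ A A).hom) ⊗≫ S.m ▷ A := by
        rw [r1, r2]; monoidal
    _ = 𝟙 _ ⊗≫ A ◁ (A ◁ ((β_ A A).inv ≫ (β_ A A).hom)) ⊗≫ A ◁ ((β_ A A).hom ▷ A) ⊗≫ 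
          ((A ⊗ A) ◁ S.m ≫ S.m ▷ A) := by
        rw [h]; monoidal
    _ = _ := by
        rw [Iso.inv_hom_id, M, PP, tensorμ, tensorHom_def']; monoidal

theorem D_aux : (α_ A A A).inv ▷ A ≫ (α_ _ _ _).hom ≫ (A ⊗ A) ◁ S.t₁ ≫ S.M =
    dTwo S.m S.t₂ ▷ A ≫ S.r2 := by
  have h := BraidedCategory.braiding_naturality_right A S.m
  rw [BraidedCategory.braiding_tensor_right_hom] at h
  symm
  calc _ = 𝟙 _ ⊗≫ (β_ A A).inv ▷ (A ⊗ A) ⊗≫ A ◁ (S.t₂ ▷ A) ⊗≫ (β_ A A).hom ▷ (A ⊗ A) ⊗≫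
          A ◁ (S.m ▷ A ≫ S.m) := by
        rw [dTwo, wl, wl, r2]; monoidal
    _ = 𝟙 _ ⊗≫ (β_ A A).inv ▷ (A ⊗ A) ⊗≫ A ◁ (S.t₂ ▷ A) ⊗≫ ((β_ A A).hom ▷ (A ⊗ A) ≫
          (A ⊗ A) ◁ S.m) ⊗≫ A ◁ S.m := by
        rw [assoc_m']; monoidal
    _ = 𝟙 _ ⊗≫ (β_ A A).inv ▷ (A ⊗ A) ⊗≫ A ◁ (wl S.t₂ ≫ A ◁ S.m) ⊗≫ (β_ A A).hom ▷ A ⊗≫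
          A ◁ S.m := by
        rw [← whisker_exchange, wl]; monoidal
    _ = 𝟙 _ ⊗≫ ((β_ A A).inv ▷ (A ⊗ A) ≫ (A ⊗ A) ◁ S.t₁) ⊗≫ (A ◁ S.m ≫ (β_ A A).hom) ▷ A ⊗≫
          A ◁ S.m := by
        rw [← S.hc12, ml]; monoidal
    _ = 𝟙 _ ⊗≫ (A ⊗ A) ◁ S.t₁ ⊗≫ ((β_ A A).inv ≫ (β_ A A).hom) ▷ (A ⊗ A) ⊗≫
          A ◁ ((β_ A A).hom ▷ A) ⊗≫ (S.m ▷ (A ⊗ A) ≫ A ◁ S.m) := by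
        rw [← whisker_exchange, h]; monoidal
    _ = _ := by
        rw [Iso.inv_hom_id, M, PP, tensorμ, MonoidalCategory.tensorHom_def]; monoidal

theorem dTwo_M : dTwo S.m S.t₂ ▷ (A ⊗ A) ≫ S.M =
    (α_ A A A).inv ▷ (A ⊗ A) ≫ (α_ _ _ _).hom ≫ (A ⊗ A) ◁ dOne S.m S.t₁ ≫ S.M := by
  symm
  calc _ = 𝟙 _ ⊗≫ (A ⊗ A) ◁ (A ◁ (β_ A A).inv ≫ (α_ A A A).inv ≫ S.t₁ ▷ A) ≫
        ((A ⊗ A) ◁ S.r1 ≫ S.M) := by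
        rw [dOne_r1]; monoidal
    _ = 𝟙 _ ⊗≫ (A ⊗ A) ◁ (A ◁ (β_ A A).inv) ⊗≫
        ((α_ A A A).inv ▷ A ≫ (α_ _ _ _).hom ≫ (A ⊗ A) ◁ S.t₁ ≫ S.M) ▷ A ≫ S.r1 := by
        rw [M_r1]; monoidal
    _ = 𝟙 _ ⊗≫ ((A ⊗ (A ⊗ A)) ◁ (β_ A A).inv ≫ dTwo S.m S.t₂ ▷ (A ⊗ A)) ⊗≫ S.r2 ▷ A ≫ S.r1 := by
        rw [D_aux]; monoidal
    _ = dTwo S.m S.t₂ ▷ (A ⊗ A) ≫ ((A ⊗ A) ◁ (β_ A A).inv ≫ (α_ _ _ _).inv ≫ S.r2 ▷ A ≫ S.r1) := by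
        rw [whisker_exchange]; monoidal
    _ = _ := by rw [M_r2r1]

end RWMB

theorem reg_map {D : Type u} [Category.{v} D] {X Y : C} {f : X ⟶ Y} (F : C ⥤ D)
    [PreservesColimitsOfShape WalkingParallelPair F]
    (h : Nonempty (RegularEpi f)) : Nonempty (RegularEpi (F.map f)) := by
  obtain ⟨h⟩ := h
  exact ⟨⟨F.obj h.W, F.map h.left, F.map h.right, by rw [← F.map_comp, h.w, F.map_comp],
    isColimitCoforkMapOfIsColimit F h.w h.isColimit⟩⟩

theorem reg_cancel {X Y Z : C} (f : X ⟶ Y) (g : Y ⟶ Z) [Epi f]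
    (h : Nonempty (RegularEpi (f ≫ g))) : Nonempty (RegularEpi g) := by
  obtain ⟨h⟩ := h
  have w := h.w
  have key : ∀ (s : Cofork (h.left ≫ f) (h.right ≫ f)),
      h.left ≫ f ≫ s.π = h.right ≫ f ≫ s.π := fun s => by
    simpa using s.condition
  refine ⟨⟨h.W, h.left ≫ f, h.right ≫ f, by simpa using w, ?_⟩⟩
  refine Cofork.IsColimit.mk _ (fun s => Cofork.IsColimit.desc h.isColimit (f ≫ s.π) (key s)) ?_ ?_
  · intro s
    have := Cofork.IsColimit.π_desc' h.isColimit (f ≫ s.π) (key s)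
    simp only [Cofork.π_ofπ, assoc] at this ⊢
    rwa [cancel_epi] at this
  · intro s mm hm
    apply Cofork.IsColimit.hom_ext h.isColimit
    have := Cofork.IsColimit.π_desc' h.isColimit (f ≫ s.π) (key s)
    rw [this]
    simp only [Cofork.π_ofπ, assoc] at hm ⊢
    rw [hm]

theorem regL (presL : ∀ X : C, PreservesColimitsOfShape WalkingParallelPair (tensorLeft X))
    (X : C) {Y Z : C} {f : Y ⟶ Z} (h : Nonempty (RegularEpi f)) : Nonempty (RegularEpi (X ◁ f)) :=
  haveI := presL X
  reg_map (tensorLeft X) h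

theorem regR (presR : ∀ X : C, PreservesColimitsOfShape WalkingParallelPair (tensorRight X))
    (X : C) {Y Z : C} {f : Y ⟶ Z} (h : Nonempty (RegularEpi f)) : Nonempty (RegularEpi (f ▷ X)) :=
  haveI := presR X
  reg_map (tensorRight X) h

theorem reg_epi {X Y : C} {f : X ⟶ Y} (h : Nonempty (RegularEpi f)) : Epi f :=
  h.elim fun h => h.epi

theorem PP_reg (presL : ∀ X : C, PreservesColimitsOfShape WalkingParallelPair (tensorLeft X))
    (presR : ∀ X : C, PreservesColimitsOfShape WalkingParallelPair (tensorRight X))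
    (regcomp : ∀ {X Y Z : C} (f : X ⟶ Y) (g : Y ⟶ Z),
      Nonempty (RegularEpi f) → Nonempty (RegularEpi g) → Nonempty (RegularEpi (f ≫ g)))
    {A B V W V' W' : C} {v : A ⊗ V ⟶ V'} {w : B ⊗ W ⟶ W'}
    (hv : Nonempty (RegularEpi v)) (hw : Nonempty (RegularEpi w)) :
    Nonempty (RegularEpi (PP v w)) := by
  haveI : IsIso (tensorμ A B V W) := by unfold tensorμ; infer_instance
  unfold PP
  rw [MonoidalCategory.tensorHom_def]
  exact regcomp _ _ ⟨RegularEpi.ofIso (asIso (tensorμ A B V W))⟩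
    (regcomp _ _ (regR presR _ hv) (regL presL _ hw))

theorem PP_nat {A B V W V' W' : C} {v : A ⊗ V ⟶ V} {w : B ⊗ W ⟶ W} {v' : A ⊗ V' ⟶ V'}
    {w' : B ⊗ W' ⟶ W'} {f : V ⟶ V'} {g : W ⟶ W'} (hf : v ≫ f = A ◁ f ≫ v')
    (hg : w ≫ g = B ◁ g ≫ w') :
    PP v w ≫ (f ⊗ₘ g) = (A ⊗ B) ◁ (f ⊗ₘ g) ≫ PP v' w' := by
  simp only [PP, assoc]
  rw [tensorμ_natural_right_assoc, tensorHom_comp_tensorHom, tensorHom_comp_tensorHom, hf, hg]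

section abstr
variable {A : C} {𝒴 : Set C} (S : RWMB A 𝒴)
variable {U : C} {P : (A ⊗ A) ⊗ U ⟶ U} {b0 : A ⊗ U ⟶ U} {s : U ⟶ U}

theorem b0_s (ep : Epi (A ◁ P)) (de : dOne S.m S.t₁ ≫ S.e₁ = dOne S.m S.t₁)
    (hs : P ≫ s = S.e₁ ▷ U ≫ P)
    (hb0 : A ◁ P ≫ b0 = (α_ A (A ⊗ A) U).inv ≫ dOne S.m S.t₁ ▷ U ≫ P) : b0 ≫ s = b0 := by
  rw [← cancel_epi (A ◁ P), reassoc_of% hb0, hb0, hs, ← comp_whiskerRight_assoc, de]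

theorem s_b0 (ep : Epi (A ◁ P))
    (hs : P ≫ s = S.e₁ ▷ U ≫ P)
    (hb0 : A ◁ P ≫ b0 = (α_ A (A ⊗ A) U).inv ≫ dOne S.m S.t₁ ▷ U ≫ P) : A ◁ s ≫ b0 = b0 := by
  have h4 : A ◁ S.e₁ ≫ dOne S.m S.t₁ = dOne S.m S.t₁ := S.ax4
  rw [← cancel_epi (A ◁ P), ← whiskerLeft_comp_assoc, hs, whiskerLeft_comp_assoc, hb0]
  calc _ = 𝟙 _ ⊗≫ (A ◁ S.e₁ ≫ dOne S.m S.t₁) ▷ U ≫ P := by monoidal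
    _ = _ := by rw [h4]; monoidal

theorem b0_assoc (ep : Epi (A ◁ A ◁ P))
    (hb0 : A ◁ P ≫ b0 = (α_ A (A ⊗ A) U).inv ≫ dOne S.m S.t₁ ▷ U ≫ P) :
    A ◁ b0 ≫ b0 = (α_ _ _ _).inv ≫ S.m ▷ U ≫ b0 := by
  rw [← cancel_epi (A ◁ A ◁ P)]
  calc _ = A ◁ (A ◁ P ≫ b0) ≫ b0 := by simp
    _ = A ◁ ((α_ A (A ⊗ A) U).inv ≫ dOne S.m S.t₁ ▷ U ≫ P) ≫ b0 := by rw [hb0]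
    _ = 𝟙 _ ⊗≫ A ◁ dOne S.m S.t₁ ▷ U ≫ (A ◁ P ≫ b0) := by monoidal
    _ = 𝟙 _ ⊗≫ (A ◁ dOne S.m S.t₁ ≫ dOne S.m S.t₁) ▷ U ≫ P := by rw [hb0]; monoidal
    _ = 𝟙 _ ⊗≫ S.m ▷ ((A ⊗ A) ⊗ U) ≫ ((α_ A (A ⊗ A) U).inv ≫ dOne S.m S.t₁ ▷ U ≫ P) := by
        rw [S.dOne_assoc]; monoidal
    _ = 𝟙 _ ⊗≫ (S.m ▷ ((A ⊗ A) ⊗ U) ≫ A ◁ P) ≫ b0 := by rw [← hb0]; monoidal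
    _ = _ := by rw [← whisker_exchange]; monoidal

theorem D2 (ep : Epi ((A ⊗ (A ⊗ A)) ◁ P))
    (hP : S.M ▷ U ≫ P = (α_ _ _ _).hom ≫ (A ⊗ A) ◁ P ≫ P)
    (hb0 : A ◁ P ≫ b0 = (α_ A (A ⊗ A) U).inv ≫ dOne S.m S.t₁ ▷ U ≫ P) :
    dTwo S.m S.t₂ ▷ U ≫ P = (α_ A A A).inv ▷ U ≫ (α_ _ _ _).hom ≫ (A ⊗ A) ◁ b0 ≫ P := by
  rw [← cancel_epi ((A ⊗ (A ⊗ A)) ◁ P)]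
  calc _ = dTwo S.m S.t₂ ▷ ((A ⊗ A) ⊗ U) ≫ (A ⊗ A) ◁ P ≫ P := by
        rw [whisker_exchange_assoc]
    _ = 𝟙 _ ⊗≫ (dTwo S.m S.t₂ ▷ (A ⊗ A) ≫ S.M) ▷ U ≫ P := by
        rw [comp_whiskerRight_assoc, hP]; monoidal
    _ = 𝟙 _ ⊗≫ (A ⊗ A) ◁ dOne S.m S.t₁ ▷ U ⊗≫ S.M ▷ U ≫ P := by
        rw [S.dTwo_M]; monoidal
    _ = 𝟙 _ ⊗≫ (A ⊗ A) ◁ ((α_ A (A ⊗ A) U).inv ≫ dOne S.m S.t₁ ▷ U ≫ P) ≫ P := by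
        rw [hP]; monoidal
    _ = _ := by rw [← hb0]; monoidal

theorem E2 (ep : Epi ((A ⊗ A) ◁ P))
    (hP : S.M ▷ U ≫ P = (α_ _ _ _).hom ≫ (A ⊗ A) ◁ P ≫ P)
    (hs : P ≫ s = S.e₁ ▷ U ≫ P) :
    S.e₂ ▷ U ≫ P = (A ⊗ A) ◁ s ≫ P := by
  rw [← cancel_epi ((A ⊗ A) ◁ P)]
  calc _ = S.e₂ ▷ ((A ⊗ A) ⊗ U) ≫ (A ⊗ A) ◁ P ≫ P := by
        rw [whisker_exchange_assoc]
    _ = 𝟙 _ ⊗≫ (S.e₂ ▷ (A ⊗ A) ≫ S.M) ▷ U ≫ P := by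
        rw [comp_whiskerRight_assoc, hP]; monoidal
    _ = 𝟙 _ ⊗≫ (A ⊗ A) ◁ S.e₁ ▷ U ⊗≫ S.M ▷ U ≫ P := by
        rw [← S.hecomp']; monoidal
    _ = 𝟙 _ ⊗≫ (A ⊗ A) ◁ (S.e₁ ▷ U ≫ P) ≫ P := by
        rw [hP]; monoidal
    _ = _ := by rw [← hs]; monoidal

theorem nd_core {E₂ X Y : C} {eHat₂ : A ⊗ A ⟶ E₂} {eCheck₂ : E₂ ⟶ A ⊗ A}
    (he₂ : eHat₂ ≫ eCheck₂ = S.e₂)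
    (ep : Epi ((dTwo S.m S.t₂ ≫ eHat₂) ▷ X))
    (hD : dTwo S.m S.t₂ ▷ U ≫ P = (α_ A A A).inv ▷ U ≫ (α_ _ _ _).hom ≫ (A ⊗ A) ◁ b0 ≫ P)
    (hE : S.e₂ ▷ U ≫ P = (A ⊗ A) ◁ s ≫ P)
    {h h' : X ⟶ U ⊗ Y} (hh : h ≫ s ▷ Y = h) (hh' : h' ≫ s ▷ Y = h')
    (hb : A ◁ h ≫ (α_ _ _ _).inv ≫ b0 ▷ Y = A ◁ h' ≫ (α_ _ _ _).inv ≫ b0 ▷ Y) :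
    (A ⊗ A) ◁ h ≫ (α_ _ _ _).inv ≫ P ▷ Y = (A ⊗ A) ◁ h' ≫ (α_ _ _ _).inv ≫ P ▷ Y := by
  have k1 : ∀ h : X ⟶ U ⊗ Y, h ≫ s ▷ Y = h →
      S.e₂ ▷ X ≫ (A ⊗ A) ◁ h ≫ (α_ _ _ _).inv ≫ P ▷ Y = (A ⊗ A) ◁ h ≫ (α_ _ _ _).inv ≫ P ▷ Y := by
    intro h hh
    calc _ = (A ⊗ A) ◁ h ≫ (α_ _ _ _).inv ≫ (S.e₂ ▷ U ≫ P) ▷ Y := by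
          rw [← whisker_exchange_assoc]; monoidal
      _ = (A ⊗ A) ◁ (h ≫ s ▷ Y) ≫ (α_ _ _ _).inv ≫ P ▷ Y := by rw [hE]; monoidal
      _ = _ := by rw [hh]
  have k2 : ∀ h : X ⟶ U ⊗ Y, 
      dTwo S.m S.t₂ ▷ X ≫ (A ⊗ A) ◁ h ≫ (α_ _ _ _).inv ≫ P ▷ Y =
      𝟙 _ ⊗≫ (A ⊗ A) ◁ (A ◁ h ≫ (α_ _ _ _).inv ≫ b0 ▷ Y) ≫ (α_ _ _ _).inv ≫ P ▷ Y := by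
    intro h
    calc _ = (A ⊗ (A ⊗ A)) ◁ h ≫ (α_ _ _ _).inv ≫ (dTwo S.m S.t₂ ▷ U ≫ P) ▷ Y := by
          rw [← whisker_exchange_assoc]; monoidal
      _ = _ := by rw [hD]; monoidal
  rw [← k1 h hh, ← k1 h' hh', ← he₂]
  simp only [comp_whiskerRight_assoc]
  congr 1
  rw [← cancel_epi ((dTwo S.m S.t₂ ≫ eHat₂) ▷ X)]
  simp only [comp_whiskerRight_assoc]
  simp only [← comp_whiskerRight_assoc eHat₂, he₂]
  rw [k1 h hh, k1 h' hh', k2, k2, hb]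
end abstr

/-- Proposition 4.8: if idempotents split and `d̂₁`, `d̂₂` are regular
epimorphisms, then for `A`-modules `(V, v)`, `(W, w)` the splitting `V ∘ W` of the
canonical idempotent `s` carries an `A`-module structure `b`, uniquely determined by
`b ∘ (1 ⊗ sHat) = sHat ∘ b⁰`; moreover for module morphisms `f`, `g` the induced morphism
`sHat' ∘ (f ⊗ g) ∘ sCheck` is a morphism of `A`-modules. -/
theorem prop_module_structure_on_VoW
    [HasCoequalizers C] [IsIdempotentComplete C]
    (presL : ∀ X : C, PreservesColimitsOfShape WalkingParallelPair (tensorLeft X))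
    (presR : ∀ X : C, PreservesColimitsOfShape WalkingParallelPair (tensorRight X))
    (regcomp : ∀ {X Y Z : C} (f : X ⟶ Y) (g : Y ⟶ Z),
      Nonempty (RegularEpi f) → Nonempty (RegularEpi g) → Nonempty (RegularEpi (f ≫ g)))
    {A : C} {𝒴 : Set C} (S : RWMB A 𝒴)
    (hmreg : Nonempty (RegularEpi S.m))
    (hclosed : ∀ Y Y' : C, Y ∈ 𝒴 → Y' ∈ 𝒴 → (Y ⊗ Y') ∈ 𝒴)
    (hretract : ∀ (X Y : C), Y ∈ 𝒴 → ∀ (i : X ⟶ Y) (r : Y ⟶ X), i ≫ r = 𝟙 X → X ∈ 𝒴)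
    (L : C) (p : A ⟶ L)
    (hpc : S.piL1 ≫ p = S.piBarR1c ≫ p)
    (hpu : ∀ {X : C} (h : A ⟶ X), S.piL1 ≫ h = S.piBarR1c ≫ h →
      ∃! k : L ⟶ X, p ≫ k = h)
    (memL : L ∈ 𝒴)
    (n₁ : L ⊗ A ⟶ A) (hn₁ : (p ▷ A) ≫ n₁ = S.piL1)
    (hndn₁ : NdRightOn n₁ 𝒴)
    (n₂ : A ⊗ L ⟶ A) (hn₂ : (A ◁ p) ≫ n₂ = S.piL2)
    (μ : L ⊗ L ⟶ L) (hμ : (L ◁ p) ≫ μ = n₁ ≫ p)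
    (δ : L ⟶ L ⊗ L) (hδ : S.m ≫ p ≫ δ = S.t₁ ≫ (p ▷ A) ≫ (L ◁ p))
    (ε : L ⟶ 𝟙_ C) (hε : p ≫ ε = S.j)
    (hμδ : δ ≫ μ = 𝟙 L)
    (τ : A ⟶ L ⊗ A) (hτ : S.m ≫ τ = S.t₁ ≫ (p ▷ A))
    (τbar : A ⟶ A ⊗ L) (hτbar : S.m ≫ τbar = (β_ A A).hom ≫ S.t₄ ≫ (A ◁ p))
    -- splittings `eHat₁, eCheck₁` and `eHat₂, eCheck₂` of the idempotents `e₁`, `e₂`,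
    -- and the hypotheses that `d̂₁ := eHat₁ ∘ d₁` and `d̂₂ := eHat₂ ∘ d₂` are regular epis
    (E₁ : C) (eHat₁ : A ⊗ A ⟶ E₁) (eCheck₁ : E₁ ⟶ A ⊗ A)
    (he₁ : eHat₁ ≫ eCheck₁ = S.e₁) (he₁' : eCheck₁ ≫ eHat₁ = 𝟙 E₁)
    (E₂ : C) (eHat₂ : A ⊗ A ⟶ E₂) (eCheck₂ : E₂ ⟶ A ⊗ A)
    (he₂ : eHat₂ ≫ eCheck₂ = S.e₂) (he₂' : eCheck₂ ≫ eHat₂ = 𝟙 E₂)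
    (hd₁ : Nonempty (RegularEpi (dOne S.m S.t₁ ≫ eHat₁)))
    (hd₂ : Nonempty (RegularEpi (dTwo S.m S.t₂ ≫ eHat₂)))
    -- two `A`-modules `(V, v)` and `(W, w)`, with coactions as in Theorem 4.3
    (M N : AModule A S.m 𝒴)
    (τbM : M.V ⟶ M.V ⊗ L)
    (hτbM : M.act ≫ τbM = (τbar ▷ M.V) ≫ (α_ A L M.V).hom ≫ (A ◁ (β_ L M.V).hom) ≫
      (α_ A M.V L).inv ≫ (M.act ▷ L))
    (τN : N.V ⟶ L ⊗ N.V)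
    (hτN : N.act ≫ τN = (τ ▷ N.V) ≫ (α_ L A N.V).hom ≫ (L ◁ N.act))
    -- a splitting `V ∘ W` of the canonical idempotent `s`
    (VoW : C) (sHat : M.V ⊗ N.V ⟶ VoW) (sCheck : VoW ⟶ M.V ⊗ N.V)
    (hsHatCheck : sHat ≫ sCheck = sIdem μ ε τbM τN) (hsChecksHat : sCheck ≫ sHat = 𝟙 VoW)
    -- the action `b⁰` of Lemma 4.6
    (b0 : A ⊗ (M.V ⊗ N.V) ⟶ M.V ⊗ N.V)
    (hb0 : (A ◁ actPair M.act N.act) ≫ b0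
      = (α_ A (A ⊗ A) (M.V ⊗ N.V)).inv ≫ (dOne S.m S.t₁ ▷ (M.V ⊗ N.V)) ≫
          actPair M.act N.act) :
    -- `V ∘ W` is again an `A`-module:
    VoW ∈ 𝒴 ∧
    (∃ b : A ⊗ VoW ⟶ VoW,
      -- `b` is uniquely determined by `b ∘ (1 ⊗ sHat) = sHat ∘ b⁰` ...
      ((A ◁ sHat) ≫ b = b0 ≫ sHat) ∧
      (∀ b' : A ⊗ VoW ⟶ VoW, (A ◁ sHat) ≫ b' = b0 ≫ sHat → b' = b) ∧
      -- ... and is associative, a regular epimorphism and non-degenerate on the left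
      ((A ◁ b) ≫ b = (α_ A A VoW).inv ≫ (S.m ▷ VoW) ≫ b) ∧
      Nonempty (RegularEpi b) ∧
      NdLeftOn b 𝒴) ∧
    -- functoriality: for module morphisms `f : V ⟶ V′`, `g : W ⟶ W′`, the induced
    -- morphism `sHat′ ∘ (f ⊗ g) ∘ sCheck : V ∘ W ⟶ V′ ∘ W′` is a morphism of `A`-modules
    (∀ (M' N' : AModule A S.m 𝒴)
      (τbM' : M'.V ⟶ M'.V ⊗ L)
      (_ : M'.act ≫ τbM' = (τbar ▷ M'.V) ≫ (α_ A L M'.V).hom ≫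
        (A ◁ (β_ L M'.V).hom) ≫ (α_ A M'.V L).inv ≫ (M'.act ▷ L))
      (τN' : N'.V ⟶ L ⊗ N'.V)
      (_ : N'.act ≫ τN' = (τ ▷ N'.V) ≫ (α_ L A N'.V).hom ≫ (L ◁ N'.act))
      (VoW' : C) (sHat' : M'.V ⊗ N'.V ⟶ VoW') (sCheck' : VoW' ⟶ M'.V ⊗ N'.V)
      (_ : sHat' ≫ sCheck' = sIdem μ ε τbM' τN') (_ : sCheck' ≫ sHat' = 𝟙 VoW')
      (b0' : A ⊗ (M'.V ⊗ N'.V) ⟶ M'.V ⊗ N'.V)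
      (_ : (A ◁ actPair M'.act N'.act) ≫ b0'
        = (α_ A (A ⊗ A) (M'.V ⊗ N'.V)).inv ≫ (dOne S.m S.t₁ ▷ (M'.V ⊗ N'.V)) ≫
            actPair M'.act N'.act)
      (b : A ⊗ VoW ⟶ VoW) (_ : (A ◁ sHat) ≫ b = b0 ≫ sHat)
      (b' : A ⊗ VoW' ⟶ VoW') (_ : (A ◁ sHat') ≫ b' = b0' ≫ sHat')
      (f : M.V ⟶ M'.V) (_ : M.act ≫ f = (A ◁ f) ≫ M'.act)
      (g : N.V ⟶ N'.V) (_ : N.act ≫ g = (A ◁ g) ≫ N'.act),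
      b ≫ (sCheck ≫ ((f ▷ N.V) ≫ (M'.V ◁ g)) ≫ sHat')
        = (A ◁ (sCheck ≫ ((f ▷ N.V) ≫ (M'.V ◁ g)) ≫ sHat')) ≫ b') := by
  have m1 : ∀ X : C, Nonempty (RegularEpi (S.m ▷ X)) := fun X => regR presR X hmreg
  have ep1 : Epi (S.m ▷ A) := reg_epi (m1 A)
  have ep2 : Epi ((A ⊗ A) ◁ S.m) := reg_epi (regL presL _ hmreg)
  have hF : sIdem μ ε τbar τ = S.e₁ := S.F_eq hclosed ep1 ep2 hn₁ hμ hε hτ hτbar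
  have de := S.dOne_e₁ hclosed
  have hPreg : Nonempty (RegularEpi (PP M.act N.act)) :=
    PP_reg presL presR regcomp M.regEpi N.regEpi
  have hPass : S.M ▷ (M.V ⊗ N.V) ≫ PP M.act N.act =
      (α_ _ _ _).hom ≫ (A ⊗ A) ◁ PP M.act N.act ≫ PP M.act N.act :=
    PP_assoc (by rw [M.assoc, Iso.hom_inv_id_assoc]) (by rw [N.assoc, Iso.hom_inv_id_assoc])
  have hs : PP M.act N.act ≫ sIdem μ ε τbM τN = S.e₁ ▷ (M.V ⊗ N.V) ≫ PP M.act N.act := by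
    rw [s_PP hτbM hτN, hF]
  have hnd : NdLeftOn (PP M.act N.act) 𝒴 := PP_nd hclosed M.nd N.nd M.mem N.mem
  have epP : ∀ X : C, Epi (X ◁ PP M.act N.act) := fun X => reg_epi (regL presL X hPreg)
  rw [actPair_eq] at hb0
  have hbs := b0_s S (epP A) de hs hb0
  have hsb := s_b0 S (epP A) hs hb0
  have hba := b0_assoc S (reg_epi (regL presL _ (regL presL _ hPreg))) hb0
  have hD := D2 S (epP _) hPass hb0
  have hE := E2 S (epP _) hPass hs
  have hcc : sCheck ≫ sIdem μ ε τbM τN = sCheck := by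
    rw [← hsHatCheck, reassoc_of% hsChecksHat]
  have hch : A ◁ sCheck ≫ A ◁ sHat = 𝟙 _ := by
    rw [← whiskerLeft_comp, hsChecksHat, whiskerLeft_id]
  have huniq : ∀ b' : A ⊗ VoW ⟶ VoW, (A ◁ sHat) ≫ b' = b0 ≫ sHat →
      b' = A ◁ sCheck ≫ b0 ≫ sHat := by
    intro b' hb'
    rw [← hb', ← assoc, hch, id_comp]
  have hbHat : A ◁ sHat ≫ (A ◁ sCheck ≫ b0 ≫ sHat) = b0 ≫ sHat := by
    rw [← whiskerLeft_comp_assoc, hsHatCheck, reassoc_of% hsb]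
  have hbCheck : (A ◁ sCheck ≫ b0 ≫ sHat) ≫ sCheck = A ◁ sCheck ≫ b0 := by
    rw [assoc, assoc, hsHatCheck, hbs]
  have splitHat : IsSplitEpi sHat := IsSplitEpi.mk' ⟨sCheck, hsChecksHat⟩
  refine ⟨hretract _ _ (hclosed _ _ M.mem N.mem) sCheck sHat hsChecksHat,
    ⟨A ◁ sCheck ≫ b0 ≫ sHat, hbHat, huniq, ?_, ?_, ?_⟩, ?_⟩
  · -- associativity
    rw [whiskerLeft_comp, whiskerLeft_comp, assoc, assoc, hbHat, reassoc_of% hba,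
      associator_inv_naturality_right_assoc, whisker_exchange_assoc]
  · -- regular epimorphism
    have r1 : Nonempty (RegularEpi (PP M.act N.act ≫ sHat)) :=
      regcomp _ _ hPreg ⟨RegularEpi.ofSplitEpi sHat⟩
    have r2 : Nonempty (RegularEpi (eCheck₁ ▷ (M.V ⊗ N.V) ≫ PP M.act N.act ≫ sHat)) := by
      haveI : Epi (eHat₁ ▷ (M.V ⊗ N.V)) :=
        SplitEpi.epi ⟨eCheck₁ ▷ (M.V ⊗ N.V), by rw [← comp_whiskerRight, he₁', id_whiskerRight]⟩
      refine reg_cancel (eHat₁ ▷ (M.V ⊗ N.V)) _ ?_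
      rw [← comp_whiskerRight_assoc, he₁, ← reassoc_of% hs, ← hsHatCheck, assoc, hsChecksHat,
        comp_id]
      exact r1
    haveI : Epi (A ◁ (PP M.act N.act ≫ sHat)) := reg_epi (regL presL _ r1)
    refine reg_cancel (A ◁ (PP M.act N.act ≫ sHat)) _ ?_
    have key : A ◁ (PP M.act N.act ≫ sHat) ≫ (A ◁ sCheck ≫ b0 ≫ sHat) =
        (α_ _ _ _).inv ≫ (dOne S.m S.t₁ ≫ eHat₁) ▷ (M.V ⊗ N.V) ≫
          eCheck₁ ▷ (M.V ⊗ N.V) ≫ PP M.act N.act ≫ sHat := by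
      rw [whiskerLeft_comp_assoc, hbHat, reassoc_of% hb0, ← comp_whiskerRight_assoc, assoc, he₁,
        de]
    rw [key]
    exact regcomp _ _ ⟨RegularEpi.ofIso (α_ A (A ⊗ A) (M.V ⊗ N.V)).symm⟩
      (regcomp _ _ (regR presR _ hd₁) r2)
  · -- non-degeneracy
    intro X Y hY g g' hg
    simp only at hg
    have hk : ∀ g : X ⟶ VoW ⊗ Y, A ◁ (g ≫ sCheck ▷ Y) ≫ (α_ _ _ _).inv ≫ b0 ▷ Y =
        (A ◁ g ≫ (α_ _ _ _).inv ≫ (A ◁ sCheck ≫ b0 ≫ sHat) ▷ Y) ≫ sCheck ▷ Y := by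
      intro g
      rw [assoc, assoc, ← comp_whiskerRight, hbCheck]
      monoidal
    have hfix : ∀ g : X ⟶ VoW ⊗ Y,
        (g ≫ sCheck ▷ Y) ≫ sIdem μ ε τbM τN ▷ Y = g ≫ sCheck ▷ Y := by
      intro g
      rw [assoc, ← comp_whiskerRight, hcc]
    have hfin := hnd X Y hY (nd_core S he₂ (reg_epi (regR presR X hd₂)) hD hE (hfix g) (hfix g')
      (by rw [hk, hk, hg]))
    have := congrArg (fun k => k ≫ sHat ▷ Y) hfin
    simpa only [assoc, ← comp_whiskerRight, hsChecksHat, id_whiskerRight, comp_id] using this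
  · -- functoriality
    intro M' N' τbM' hτbM' τN' hτN' VoW' sHat' sCheck' hs1 hs2 b0' hb0' b hb b' hb' f hf g hg
    rw [actPair_eq] at hb0'
    rw [← MonoidalCategory.tensorHom_def]
    have hn := PP_nat hf hg
    have hfg : b0 ≫ (f ⊗ₘ g) = A ◁ (f ⊗ₘ g) ≫ b0' := by
      haveI := epP A
      rw [← cancel_epi (A ◁ PP M.act N.act), reassoc_of% hb0, hn, ← whiskerLeft_comp_assoc, hn,
        whiskerLeft_comp_assoc, hb0', associator_inv_naturality_right_assoc,
        whisker_exchange_assoc]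
    rw [huniq b hb, ← assoc _ sCheck, hbCheck, assoc, reassoc_of% hfg, whiskerLeft_comp, whiskerLeft_comp,
      assoc, assoc, hb']

end WeakMultiplierBimonoid
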